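/- arXiv:q-alg/9712043 — 7 statements merged into one kernel-verified Lean document; each statement's English description precedes it below -/
import Mathlib

section
/- Let 0 ≤ α < β < ∞ and let F : [α,β] → ℝ be continuous. Then lim_{ρ → +∞} ρ · β^{-ρ} · ∫_α^β F(x) x^{ρ-1} dx = F(β). -/
open MeasureTheory Set Filter

lemma aux_bound (α β : ℝ) (hαβ : α < β) (F : ℝ → ℝ)
    (hF : ContinuousOn F (Icc α β)) (ε : ℝ) (hε : 0 < ε) :
    ∃ K : ℝ, 0 ≤ K ∧ ∀ x ∈ Icc α β, |F x - F β| ≤ ε + K * (β - x) := by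
  obtain ⟨M, hM⟩ := isCompact_Icc.exists_bound_of_continuousOn
    (hF.sub (continuousOn_const (c := F β)))
  have hβ : β ∈ Icc α β := ⟨hαβ.le, le_rfl⟩
  have hM0 : 0 ≤ M := (norm_nonneg _).trans (hM β hβ)
  obtain ⟨δ, hδ, h⟩ := Metric.continuousOn_iff.1 hF β hβ ε hε
  refine ⟨M / δ, by positivity, fun x hx => ?_⟩
  have hx2 : 0 ≤ β - x := by linarith [hx.2]
  by_cases hc : β - x < δ
  · have := h x hx (by rw [Real.dist_eq, abs_sub_comm, abs_of_nonneg hx2]; exact hc)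
    rw [Real.dist_eq] at this
    have : 0 ≤ M / δ * (β - x) := by positivity
    linarith
  · have h1 := hM x hx
    simp only [Pi.sub_apply, Real.norm_eq_abs] at h1
    have : M / δ * δ ≤ M / δ * (β - x) := by
      apply mul_le_mul_of_nonneg_left (not_lt.1 hc); positivity
    rw [div_mul_cancel₀ _ hδ.ne'] at this
    linarith

lemma aux_est (α β : ℝ) (hα : 0 ≤ α) (hαβ : α < β) (F : ℝ → ℝ)
    (hF : ContinuousOn F (Icc α β)) (ε K : ℝ) (hε : 0 < ε) (hK : 0 ≤ K)
    (h : ∀ x ∈ Icc α β, |F x - F β| ≤ ε + K * (β - x)) (ρ : ℝ) (hρ : 1 < ρ) :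
    |ρ * β ^ (-ρ) * (∫ x in α..β, F x * x ^ (ρ - 1)) - F β|
      ≤ ε + K * β / (ρ + 1) + |F β| * (α / β) ^ ρ := by
  have hβ : 0 < β := by linarith
  have hc : Continuous (fun x : ℝ => x ^ (ρ - 1)) :=
    Real.continuous_rpow_const (by linarith)
  have hc2 : Continuous (fun x : ℝ => x ^ ρ) :=
    Real.continuous_rpow_const (by linarith)
  have hi1 : ∫ x in α..β, x ^ (ρ - 1) = (β ^ ρ - α ^ ρ) / ρ := by
    rw [integral_rpow (Or.inl (by linarith))]; simp
  have hi2 : ∫ x in α..β, x ^ ρ = (β ^ (ρ + 1) - α ^ (ρ + 1)) / (ρ + 1) := by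
    rw [integral_rpow (Or.inl (by linarith))]
  have hFi : IntervalIntegrable (fun x => F x * x ^ (ρ - 1)) volume α β := by
    apply ContinuousOn.intervalIntegrable
    rw [uIcc_of_le hαβ.le]
    exact hF.mul hc.continuousOn
  have hs : ∫ x in α..β, (F x - F β) * x ^ (ρ - 1) =
      (∫ x in α..β, F x * x ^ (ρ - 1)) - F β * ((β ^ ρ - α ^ ρ) / ρ) := by
    rw [← hi1, ← intervalIntegral.integral_const_mul, ← intervalIntegral.integral_sub hFi
      ((hc.intervalIntegrable _ _).const_mul _)]
    simp only [sub_mul]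
  have hb : |∫ x in α..β, (F x - F β) * x ^ (ρ - 1)| ≤
      ∫ x in α..β, ((ε + K * β) * x ^ (ρ - 1) - K * x ^ ρ) := by
    rw [← Real.norm_eq_abs]
    apply intervalIntegral.norm_integral_le_of_norm_le hαβ.le
    · refine Eventually.of_forall fun x hx => ?_
      have hx0 : 0 < x := by linarith [hx.1]
      have := h x ⟨hx.1.le, hx.2⟩
      have e : x ^ ρ = x ^ (ρ - 1) * x := by
        rw [← Real.rpow_add_one hx0.ne']; simp
      rw [norm_mul, Real.norm_eq_abs, Real.norm_of_nonneg (Real.rpow_nonneg hx0.le _), e]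
      have := mul_le_mul_of_nonneg_right this (Real.rpow_nonneg hx0.le (ρ - 1))
      linarith
    · exact (((continuous_const.mul hc).sub (continuous_const.mul hc2))).intervalIntegrable _ _
  rw [intervalIntegral.integral_sub ((hc.intervalIntegrable _ _).const_mul _)
    ((hc2.intervalIntegrable _ _).const_mul _), intervalIntegral.integral_const_mul,
    intervalIntegral.integral_const_mul, hi1, hi2, hs, Real.rpow_add_one hβ.ne',
    Real.rpow_add_one' hα (by linarith)] at hb
  rw [Real.div_rpow hα hβ.le, Real.rpow_neg hβ.le]
  have hB : 0 < β ^ ρ := Real.rpow_pos_of_pos hβ _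
  have hA : 0 ≤ α ^ ρ := Real.rpow_nonneg hα _
  generalize β ^ ρ = B at *
  generalize α ^ ρ = A at *
  generalize (∫ x in α..β, F x * x ^ (ρ - 1)) = I at *
  have hρ0 : 0 < ρ := by linarith
  have e1 : ρ * B⁻¹ * I - F β = ρ * B⁻¹ * (I - F β * ((B - A) / ρ)) - F β * (A / B) := by
    field_simp; ring
  rw [e1]
  refine (abs_sub _ _).trans ?_
  rw [abs_mul, abs_mul (F β), abs_of_nonneg (show 0 ≤ ρ * B⁻¹ by positivity),
    abs_of_nonneg (show 0 ≤ A / B by positivity)]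
  have h3 := mul_le_mul_of_nonneg_left hb (show 0 ≤ ρ * B⁻¹ by positivity)
  have e2 : ρ * B⁻¹ * ((ε + K * β) * ((B - A) / ρ) - K * ((B * β - A * α) / (ρ + 1)))
      = ε + K * β / (ρ + 1) - (ε * A / B + K * A / B * ((β - α) + α / (ρ + 1))) := by
    field_simp; ring
  have h4 : 0 ≤ ε * A / B + K * A / B * ((β - α) + α / (ρ + 1)) := by
    have : 0 ≤ β - α := by linarith
    positivity
  linarith

/-- For `0 ≤ α < β < ∞` and `F` continuous on `[α,β]`:
`lim_{ρ → +∞} ρ β^{-ρ} ∫_α^β F(x) x^{ρ-1} dx = F(β)`. -/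
theorem stmt_4 (α β : ℝ) (hα : 0 ≤ α) (hαβ : α < β) (F : ℝ → ℝ)
    (hF : ContinuousOn F (Icc α β)) :
    Tendsto (fun ρ : ℝ => ρ * β ^ (-ρ) * ∫ x in α..β, F x * x ^ (ρ - 1))
      atTop (nhds (F β)) := by
  have hβ : 0 < β := by linarith
  rw [Metric.tendsto_nhds]
  intro ε hε
  obtain ⟨K, hK, h⟩ := aux_bound α β hαβ F hF (ε / 2) (by linarith)
  have h0 : 0 ≤ α / β := by positivity
  have t1 : Tendsto (fun ρ : ℝ => (α / β) ^ ρ) atTop (nhds 0) :=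
    tendsto_rpow_atTop_of_base_lt_one _ (by linarith) ((div_lt_one hβ).2 hαβ)
  have t2 : Tendsto (fun ρ : ℝ => K * β / (ρ + 1)) atTop (nhds 0) :=
    (tendsto_atTop_add_const_right _ _ tendsto_id).const_div_atTop _
  have t3 := (t2.const_add (ε / 2)).add (t1.const_mul |F β|)
  have t4 := t3.eventually_lt_const (u := ε) (by simp; linarith)
  filter_upwards [t4, eventually_gt_atTop 1] with ρ h1 h2
  rw [Real.dist_eq]
  exact (aux_est α β hα hαβ F hF (ε / 2) K (by linarith) hK h ρ h2).trans_lt h1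
end

section
/- Let 0 ≤ α < β < ∞, let b be a natural number, and let F : [α,β] → ℝ be of class C^{b+1} with F^{(k)}(β) = 0 for all k = 0, …, b. Then lim_{ρ → +∞} ρ^{b+2} · β^{-ρ} · ∫_α^β F(x) x^{ρ-1} dx = (-1)^{b+1} F^{(b+1)}(β) · β^{b+1}. -/
open MeasureTheory Set Filter

theorem aux_pow_rpow (k : ℕ) (r : ℝ) (hr : 0 ≤ r) (hr1 : r < 1) :
    Tendsto (fun ρ : ℝ => ρ ^ k * r ^ ρ) atTop (nhds 0) := by
  rcases hr.eq_or_lt with h | h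
  · subst h
    apply tendsto_const_nhds.congr'
    filter_upwards [eventually_gt_atTop 0] with ρ hρ
    rw [Real.zero_rpow hρ.ne', mul_zero]
  · have := tendsto_rpow_mul_exp_neg_mul_atTop_nhds_zero k (-Real.log r)
      (by linarith [Real.log_neg h hr1])
    refine this.congr fun ρ => ?_
    rw [Real.rpow_natCast, Real.rpow_def_of_pos h, neg_neg]

theorem aux_base (α β : ℝ) (hα : 0 ≤ α) (hαβ : α < β) (G : ℝ → ℝ)
    (hG : ContinuousOn G (Icc α β)) :
    Tendsto (fun ρ : ℝ => ρ * β ^ (-ρ) * ∫ x in α..β, G x * x ^ (ρ - 1)) atTop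
      (nhds (G β)) := by
  have hβ : 0 < β := hα.trans_lt hαβ
  have key := tendsto_setIntegral_peak_smul_of_integrableOn_of_tendsto
    (μ := volume) (s := Ioc α β) (t := Ioc α β) (x₀ := β) (l := atTop) (g := G) (a := G β)
    (φ := fun ρ x : ℝ => ρ * β ^ (-ρ) * x ^ (ρ - 1)) measurableSet_Ioc measurableSet_Ioc
    le_rfl self_mem_nhdsWithin (by simp) ?_ ?_ ?_ ?_ ?_ ?_
  · refine key.congr fun ρ => ?_
    rw [intervalIntegral.integral_of_le hαβ.le, ← integral_const_mul]
    congr 1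
    ext x
    simp only [smul_eq_mul]
    ring
  · filter_upwards [eventually_ge_atTop 0] with ρ hρ x hx
    have := hα.trans_lt hx.1
    positivity
  · intro u hu hβu
    obtain ⟨d, hd, hdu⟩ := exists_Ioc_subset_of_mem_nhds (hu.mem_nhds hβu) ⟨β - 1, by linarith⟩
    set δ := max d (β / 2) with hδ
    have hδβ : δ < β := max_lt hd (by linarith)
    have hδ0 : 0 < δ := lt_of_lt_of_le (by linarith) (le_max_right _ _)
    have hlim : Tendsto (fun ρ : ℝ => δ⁻¹ * (ρ ^ 1 * (δ / β) ^ ρ)) atTop (nhds (δ⁻¹ * 0)) :=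
      (aux_pow_rpow 1 (δ / β) (by positivity) ((div_lt_one hβ).2 hδβ)).const_mul _
    rw [mul_zero] at hlim
    rw [Metric.tendstoUniformlyOn_iff]
    intro ε hε
    filter_upwards [(tendsto_order.1 hlim).2 ε hε, eventually_ge_atTop 1] with ρ h1 hρ x hx
    have hx0 : 0 < x := hα.trans_lt hx.1.1
    have hxδ : x ≤ δ := by
      by_contra hlt
      exact hx.2 (hdu ⟨(le_max_left _ _).trans_lt (not_le.1 hlt), hx.1.2⟩)
    have h0 : 0 ≤ ρ * β ^ (-ρ) * x ^ (ρ - 1) := by positivity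
    simp only [Pi.zero_apply, dist_zero_left, Real.norm_eq_abs]
    rw [abs_of_nonneg h0]
    refine lt_of_le_of_lt ?_ h1
    calc ρ * β ^ (-ρ) * x ^ (ρ - 1) ≤ ρ * β ^ (-ρ) * δ ^ (ρ - 1) := by
          gcongr
      _ = _ := by
          rw [Real.rpow_sub_one hδ0.ne', Real.div_rpow hδ0.le hβ.le, Real.rpow_neg hβ.le]
          ring
  · have hlim := (aux_pow_rpow 0 (α / β) (by positivity) ((div_lt_one hβ).2 hαβ)).const_sub 1
    rw [sub_zero] at hlim
    refine hlim.congr' ?_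
    filter_upwards [eventually_gt_atTop 0] with ρ hρ
    rw [integral_const_mul, ← intervalIntegral.integral_of_le hαβ.le,
      integral_rpow (Or.inl (by linarith)), Real.div_rpow hα hβ.le, Real.rpow_neg hβ.le,
      sub_add_cancel]
    have : β ^ ρ ≠ 0 := (Real.rpow_pos_of_pos hβ ρ).ne'
    field_simp
  · filter_upwards with ρ
    exact (by fun_prop : Measurable fun x : ℝ => ρ * β ^ (-ρ) * x ^ (ρ - 1)).aestronglyMeasurable
  · exact (hG.integrableOn_Icc).mono_set Ioc_subset_Icc_self
  · exact ((hG β ⟨hαβ.le, le_rfl⟩).mono Ioc_subset_Icc_self)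

theorem aux_parts (α β : ℝ) (hα : 0 ≤ α) (hαβ : α < β) (F : ℝ → ℝ)
    (hF : DifferentiableOn ℝ F (Icc α β))
    (hF' : ContinuousOn (derivWithin F (Icc α β)) (Icc α β)) (hβ : F β = 0)
    (ρ : ℝ) (hρ : 1 < ρ) :
    ∫ x in α..β, F x * x ^ (ρ - 1) =
      -(F α * α ^ ρ / ρ) - ρ⁻¹ * ∫ x in α..β, derivWithin F (Icc α β) x * x ^ ρ := by
  have hu : uIcc α β = Icc α β := uIcc_of_le hαβ.le
  have := intervalIntegral.integral_mul_deriv_eq_deriv_mul_of_hasDerivWithinAt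
    (a := α) (b := β) (u := F) (u' := derivWithin F (Icc α β)) (v := fun x => x ^ ρ / ρ)
    (v' := fun x => x ^ (ρ - 1)) ?_ ?_ ?_ ?_
  · rw [this, hβ, ← intervalIntegral.integral_const_mul]
    have e : ∀ x : ℝ, derivWithin F (Icc α β) x * (x ^ ρ / ρ) =
      ρ⁻¹ * (derivWithin F (Icc α β) x * x ^ ρ) := fun x => by ring
    simp only [e]
    ring
  · rw [hu]
    exact fun x hx => (hF x hx).hasDerivWithinAt
  · intro x _
    have h := ((Real.hasDerivAt_rpow_const (x := x) (p := ρ) (Or.inr hρ.le)).div_const ρ)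
    rw [mul_div_cancel_left₀ _ (by linarith : ρ ≠ 0)] at h
    exact h.hasDerivWithinAt
  · exact ContinuousOn.intervalIntegrable (by rwa [hu])
  · exact (Real.continuous_rpow_const (by linarith)).intervalIntegrable _ _

theorem aux_main (α β : ℝ) (hα : 0 ≤ α) (hαβ : α < β) (n : ℕ) : ∀ (F : ℝ → ℝ)
    (_ : ContDiffOn ℝ (n : ℕ) F (Icc α β))
    (_ : ∀ k : ℕ, k < n → iteratedDerivWithin k F (Icc α β) β = 0),
    Tendsto
      (fun ρ : ℝ => ρ ^ (n + 1) * β ^ (-ρ) * ∫ x in α..β, F x * x ^ (ρ - 1))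
      atTop
      (nhds ((-1 : ℝ) ^ n * iteratedDerivWithin n F (Icc α β) β * β ^ n)) := by
  have hβ : 0 < β := hα.trans_lt hαβ
  induction n with
  | zero =>
    intro F hF _
    simpa using aux_base α β hα hαβ F hF.continuousOn
  | succ n ih =>
    intro F hF hv
    have hF2 := hF
    push_cast at hF2
    rw [contDiffOn_succ_iff_derivWithin (uniqueDiffOn_Icc hαβ)] at hF2
    obtain ⟨hd, -, hc⟩ := hF2
    have hFβ : F β = 0 := by simpa using hv 0 (Nat.succ_pos n)
    have IH := ih (derivWithin F (Icc α β)) hc (fun k hk => by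
      rw [← iteratedDerivWithin_succ']
      exact hv (k + 1) (by omega))
    rw [← iteratedDerivWithin_succ'] at IH
    have IH1 := IH.comp (tendsto_atTop_add_const_right atTop (1 : ℝ) tendsto_id)
    have hr : Tendsto (fun ρ : ℝ => (1 - (ρ + 1)⁻¹) ^ (n + 1)) atTop (nhds 1) := by
      have h1 : Tendsto (fun ρ : ℝ => (ρ + 1)⁻¹) atTop (nhds 0) :=
        tendsto_inv_atTop_zero.comp (tendsto_atTop_add_const_right atTop (1 : ℝ) tendsto_id)
      simpa using (h1.const_sub 1).pow (n + 1)
    have h0 := (aux_pow_rpow (n + 1) (α / β) (by positivity)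
      ((div_lt_one hβ).2 hαβ)).const_mul (-F α)
    have hall := h0.sub ((hr.mul IH1).const_mul β)
    refine (hall.congr' ?_).trans_eq ?_
    · filter_upwards [eventually_gt_atTop 1] with ρ hρ
      rw [aux_parts α β hα hαβ F hd hc.continuousOn hFβ ρ hρ]
      simp only [Function.comp, id, add_sub_cancel_right]
      have e1 : (1 - (ρ + 1)⁻¹) = ρ / (ρ + 1) := by
        have : ρ + 1 ≠ 0 := by linarith
        field_simp
        ring
      have hb : β ^ (-(ρ + 1)) = β ^ (-ρ) / β := by
        rw [neg_add, ← sub_eq_add_neg, Real.rpow_sub_one hβ.ne']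
      rw [e1, hb, Real.div_rpow hα hβ.le, Real.rpow_neg hβ.le, div_pow]
      have : β ^ ρ ≠ 0 := (Real.rpow_pos_of_pos hβ ρ).ne'
      have : ρ + 1 ≠ 0 := by linarith
      have : ρ ≠ 0 := by linarith
      field_simp
      ring
    · congr 1
      ring

/-- For `0 ≤ α < β < ∞`, `b : ℕ`, and `F` of class `C^{b+1}` on `[α,β]` with
`F^{(k)}(β) = 0` for `k = 0, …, b`:
`lim_{ρ → +∞} ρ^{b+2} β^{-ρ} ∫_α^β F(x) x^{ρ-1} dx
  = (-1)^{b+1} F^{(b+1)}(β) β^{b+1}`. -/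
theorem stmt_5 (α β : ℝ) (hα : 0 ≤ α) (hαβ : α < β) (b : ℕ) (F : ℝ → ℝ)
    (hF : ContDiffOn ℝ (b + 1 : ℕ) F (Icc α β))
    (hvanish : ∀ k : ℕ, k ≤ b → iteratedDerivWithin k F (Icc α β) β = 0) :
    Tendsto
      (fun ρ : ℝ => ρ ^ (b + 2) * β ^ (-ρ) * ∫ x in α..β, F x * x ^ (ρ - 1))
      atTop
      (nhds ((-1 : ℝ) ^ (b + 1) * iteratedDerivWithin (b + 1) F (Icc α β) β *
        β ^ (b + 1))) := by
  exact aux_main α β hα hαβ (b + 1) F hF (fun k hk => hvanish k (by omega))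
end

section
/- Let 0 < α < β < ∞ and let F : [α,β] → ℝ be continuous. Then lim_{ρ → -∞} (-ρ) · α^{-ρ} · ∫_α^β F(x) x^{ρ-1} dx = F(α). -/
open MeasureTheory Set Filter

lemma aux_pow (α c ρ : ℝ) (hα : 0 < α) (hc : 0 < c) :
    α ^ (-ρ) * c ^ ρ = Real.exp (-(Real.log c - Real.log α) * (-ρ)) := by
  rw [Real.rpow_def_of_pos hα, Real.rpow_def_of_pos hc, ← Real.exp_add]
  congr 1; ring

lemma aux_lim (α c : ℝ) (hα : 0 < α) (hc : α < c) (s : ℝ) :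
    Tendsto (fun ρ : ℝ => (-ρ) ^ s * (α ^ (-ρ) * c ^ ρ)) atBot (nhds 0) := by
  have hb : 0 < Real.log c - Real.log α := sub_pos.2 (Real.log_lt_log hα hc)
  have h := (tendsto_rpow_mul_exp_neg_mul_atTop_nhds_zero s _ hb).comp tendsto_neg_atBot_atTop
  refine h.congr fun ρ => ?_
  rw [aux_pow α c ρ hα (hα.trans hc)]; rfl

/-- For `0 < α < β < ∞` and `F` continuous on `[α,β]`:
`lim_{ρ → -∞} (-ρ) α^{-ρ} ∫_α^β F(x) x^{ρ-1} dx = F(α)`. -/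
theorem stmt_6 (α β : ℝ) (hα : 0 < α) (hαβ : α < β) (F : ℝ → ℝ)
    (hF : ContinuousOn F (Icc α β)) :
    Tendsto (fun ρ : ℝ => (-ρ) * α ^ (-ρ) * ∫ x in α..β, F x * x ^ (ρ - 1))
      atBot (nhds (F α)) := by
  have key := tendsto_setIntegral_peak_smul_of_integrableOn_of_tendsto (μ := volume)
    (s := Ioc α β) (t := Ioc α β) (x₀ := α) (l := atBot) (g := F) (a := F α)
    (φ := fun (ρ : ℝ) (x : ℝ) => (-ρ) * α ^ (-ρ) * x ^ (ρ - 1))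
    measurableSet_Ioc measurableSet_Ioc subset_rfl self_mem_nhdsWithin
    (by simp) ?_ ?_ ?_ ?_ ?_ ?_
  · refine key.congr fun ρ => ?_
    rw [intervalIntegral.integral_of_le hαβ.le, ← integral_const_mul]
    congr 1; ext x; simp only [smul_eq_mul]; ring
  · filter_upwards [eventually_lt_atBot (0:ℝ)] with ρ hρ x hx
    have : 0 < x := hα.trans hx.1
    have : 0 < -ρ := by linarith
    positivity
  · intro u hu hαu
    obtain ⟨δ, hδ, hball⟩ := Metric.isOpen_iff.1 hu α hαu
    have hc : 0 < α + δ := by linarith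
    have hl := (aux_lim α (α + δ) hα (by linarith) 1).mul_const (α + δ)⁻¹
    rw [zero_mul] at hl
    rw [Metric.tendstoUniformlyOn_iff]
    intro ε hε
    filter_upwards [eventually_lt_atBot (0:ℝ), hl.eventually (gt_mem_nhds hε)] with ρ hρ hlt x hx
    have hx0 : 0 < x := hα.trans hx.1.1
    have hxc : α + δ ≤ x := by
      by_contra! h
      apply hx.2
      apply hball
      rw [Metric.mem_ball, Real.dist_eq, abs_lt]
      constructor <;> linarith [hx.1.1]
    have hn : 0 < -ρ := by linarith
    have h1 : x ^ (ρ - 1) ≤ (α + δ) ^ (ρ - 1) :=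
      Real.rpow_le_rpow_of_nonpos hc hxc (by linarith)
    have h2 : (α + δ) ^ (ρ - 1) = (α + δ) ^ ρ * (α + δ)⁻¹ := by
      rw [Real.rpow_sub_one hc.ne']; rfl
    have h3 : 0 ≤ (-ρ) * α ^ (-ρ) * x ^ (ρ - 1) := by positivity
    rw [Pi.zero_apply, dist_zero_left, Real.norm_eq_abs, abs_of_nonneg h3]
    calc _ ≤ (-ρ) * α ^ (-ρ) * (α + δ) ^ (ρ - 1) := by gcongr
      _ = (-ρ) ^ (1:ℝ) * (α ^ (-ρ) * (α + δ) ^ ρ) * (α + δ)⁻¹ := by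
        rw [h2, Real.rpow_one]; ring
      _ < ε := hlt
  · have hl := (aux_lim α β hα hαβ 0).const_sub 1
    rw [sub_zero] at hl
    refine hl.congr' ?_
    filter_upwards [eventually_lt_atBot (0:ℝ)] with ρ hρ
    rw [integral_const_mul, ← intervalIntegral.integral_of_le hαβ.le, integral_rpow]
    · have : α ^ (-ρ) * α ^ ρ = 1 := by rw [← Real.rpow_add hα]; simp
      rw [Real.rpow_zero, sub_add_cancel]
      have h : ρ ≠ 0 := hρ.ne
      field_simp
      linear_combination -this
    · right
      refine ⟨by linarith, ?_⟩
      rw [uIcc_of_le hαβ.le]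
      exact fun h => absurd h.1 (by linarith)
  · refine Eventually.of_forall fun ρ => ?_
    exact (by fun_prop : Measurable fun x : ℝ => (-ρ) * α ^ (-ρ) * x ^ (ρ - 1)).aestronglyMeasurable
  · exact (hF.integrableOn_compact isCompact_Icc).mono_set Ioc_subset_Icc_self
  · exact (hF α (left_mem_Icc.2 hαβ.le)).mono Ioc_subset_Icc_self
end

section
/- Let 0 < α < β < ∞ and let F : [α,β] → [0,∞) be continuous with F(α) > 0 and F(β) > 0. Define F̂(ρ) = ∫_α^β F(x) x^{ρ-1} dx and ψ(ρ) = F̂(ρ+1)/F̂(ρ). Then lim_{ρ → +∞} ψ(ρ) = β and lim_{ρ → -∞} ψ(ρ) = α. -/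
open MeasureTheory Set Filter

lemma aux_neg {ι : Type*} (l : Filter ι) (a b c : ℝ) (hac : a < c) (hcb : c < b)
    (G : ℝ → ℝ) (w : ι → ℝ → ℝ) (hG : ContinuousOn G (Icc a b))
    (hwc : ∀ᶠ t in l, ContinuousOn (w t) (Icc a b))
    (hwm : ∀ᶠ t in l, MonotoneOn (w t) (Icc a b))
    (hwp : ∀ᶠ t in l, ∀ x ∈ Icc a b, 0 < w t x)
    (hwl : ∀ c d, a < c → c < d → d < b → Tendsto (fun t => w t c / w t d) l (nhds 0))
    (hG0 : ∀ x ∈ Icc c b, G x ≤ 0) (hGb : G b < 0) :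
    ∀ᶠ t in l, ∫ x in a..b, G x * w t x < 0 := by
  obtain ⟨m, hm0, hm⟩ : ∃ m, 0 < m ∧ G b < -m := ⟨-G b / 2, by linarith, by linarith⟩
  have hev : ∀ᶠ x in nhdsWithin b (Icc a b), G x < -m :=
    (hG b ⟨by linarith, le_rfl⟩).eventually (gt_mem_nhds hm)
  obtain ⟨δ, hδ, hδG⟩ := Metric.mem_nhdsWithin_iff.1 hev
  obtain ⟨d, hd1, hdb⟩ : ∃ d, max c (b - δ) < d ∧ d < b :=
    exists_between (max_lt hcb (by linarith))
  have hcd : c < d := (le_max_left _ _).trans_lt hd1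
  have hdδ : b - δ < d := (le_max_right _ _).trans_lt hd1
  have hGd : ∀ x ∈ Icc d b, G x ≤ -m := by
    intro x hx
    have : x ∈ Metric.ball b δ ∩ Icc a b := by
      refine ⟨?_, by linarith [hx.1], hx.2⟩
      rw [Metric.mem_ball, Real.dist_eq, abs_lt]
      constructor <;> linarith [hx.1, hx.2]
    exact (hδG this).le
  obtain ⟨M, hM⟩ := (isCompact_Icc.image_of_continuousOn hG).bddAbove
  have hM' : ∀ x ∈ Icc a b, G x ≤ max M 1 := fun x hx =>
    (hM (mem_image_of_mem _ hx)).trans (le_max_left _ _)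
  set K := max M 1
  have hK : 0 < K := lt_of_lt_of_le one_pos (le_max_right _ _)
  have hr : 0 < m * (b - d) / (K * (c - a)) := by
    apply div_pos <;> apply mul_pos <;> linarith
  filter_upwards [hwc, hwm, hwp, (hwl c d hac hcd hdb).eventually (gt_mem_nhds hr)]
    with t h1 h2 h3 h4
  have hcI : c ∈ Icc a b := ⟨by linarith, by linarith⟩
  have hdI : d ∈ Icc a b := ⟨by linarith, by linarith⟩
  have hint : ∀ p q, a ≤ p → p ≤ q → q ≤ b →
      IntervalIntegrable (fun x => G x * w t x) volume p q := by
    intro p q hp hpq hq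
    apply ContinuousOn.intervalIntegrable
    rw [uIcc_of_le hpq]
    exact (hG.mul h1).mono (Icc_subset_Icc hp hq)
  have e1 := intervalIntegral.integral_add_adjacent_intervals
    (hint a c le_rfl hac.le hcb.le) (hint c d hac.le hcd.le hdb.le)
  have e2 := intervalIntegral.integral_add_adjacent_intervals
    (hint a d le_rfl hdI.1 hdb.le) (hint d b hdI.1 hdb.le le_rfl)
  have i1 : ∫ x in a..c, G x * w t x ≤ ∫ x in a..c, K * w t c := by
    apply intervalIntegral.integral_mono_on hac.le (hint a c le_rfl hac.le hcb.le) (by simp)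
    intro x hx
    have hxI : x ∈ Icc a b := ⟨hx.1, hx.2.trans hcb.le⟩
    exact mul_le_mul (hM' x hxI) (h2 hxI hcI hx.2) (h3 x hxI).le hK.le
  have i2 : ∫ x in c..d, G x * w t x ≤ ∫ x in c..d, (0 : ℝ) := by
    apply intervalIntegral.integral_mono_on hcd.le (hint c d hac.le hcd.le hdb.le) (by simp)
    intro x hx
    have hxI : x ∈ Icc a b := ⟨hac.le.trans hx.1, hx.2.trans hdb.le⟩
    exact mul_nonpos_of_nonpos_of_nonneg (hG0 x ⟨hx.1, hxI.2⟩) (h3 x hxI).le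
  have i3 : ∫ x in d..b, G x * w t x ≤ ∫ x in d..b, -(m * w t d) := by
    apply intervalIntegral.integral_mono_on hdb.le (hint d b hdI.1 hdb.le le_rfl) (by simp)
    intro x hx
    have hxI : x ∈ Icc a b := ⟨hdI.1.trans hx.1, hx.2⟩
    have q1 := hGd x hx
    have q2 := h2 hdI hxI hx.1
    have q3 := h3 x hxI
    nlinarith
  simp only [intervalIntegral.integral_const, smul_eq_mul] at i1 i2 i3
  rw [div_lt_div_iff₀ (h3 d hdI) (mul_pos hK (by linarith))] at h4
  nlinarith

lemma aux_lim_s7 {ι : Type*} (l : Filter ι) (a b : ℝ) (hab : a < b)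
    (F : ℝ → ℝ) (w : ι → ℝ → ℝ) (hF : ContinuousOn F (Icc a b))
    (hF0 : ∀ x ∈ Icc a b, 0 ≤ F x) (hFb : 0 < F b)
    (hwc : ∀ᶠ t in l, ContinuousOn (w t) (Icc a b))
    (hwm : ∀ᶠ t in l, MonotoneOn (w t) (Icc a b))
    (hwp : ∀ᶠ t in l, ∀ x ∈ Icc a b, 0 < w t x)
    (hwl : ∀ c d, a < c → c < d → d < b → Tendsto (fun t => w t c / w t d) l (nhds 0)) :
    (∀ᶠ t in l, 0 < ∫ x in a..b, F x * w t x) ∧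
    Tendsto (fun t => (∫ x in a..b, F x * x * w t x) / ∫ x in a..b, F x * w t x) l
      (nhds b) := by
  have hpos : ∀ᶠ t in l, 0 < ∫ x in a..b, F x * w t x := by
    have := aux_neg l a b ((a+b)/2) (by linarith) (by linarith) (fun x => - F x) w hF.neg
      hwc hwm hwp hwl (fun x hx => by
        have := hF0 x ⟨by linarith [hx.1], hx.2⟩
        simpa using this) (by simpa using hFb)
    filter_upwards [this] with t ht
    simpa using ht
  have hI : ∀ t, ContinuousOn (w t) (Icc a b) → ∀ c : ℝ, ∫ x in a..b, F x * (c - x) * w t x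
      = c * (∫ x in a..b, F x * w t x) - ∫ x in a..b, F x * x * w t x := by
    intro t h1 c
    rw [← intervalIntegral.integral_const_mul, ← intervalIntegral.integral_sub]
    · congr 1; ext x; ring
    · apply ContinuousOn.intervalIntegrable
      rw [uIcc_of_le hab.le]
      exact continuousOn_const.mul (hF.mul h1)
    · apply ContinuousOn.intervalIntegrable
      rw [uIcc_of_le hab.le]
      exact (hF.mul continuousOn_id).mul h1
  refine ⟨hpos, tendsto_order.2 ⟨fun a' ha' => ?_, fun a' ha' => ?_⟩⟩
  · obtain ⟨c, hc, hcb⟩ : ∃ c, max a' a < c ∧ c < b := exists_between (max_lt ha' hab)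
    have hac : a < c := (le_max_right _ _).trans_lt hc
    have hac' : a' < c := (le_max_left _ _).trans_lt hc
    have := aux_neg l a b c hac hcb (fun x => F x * (c - x)) w
      (hF.mul (continuousOn_const.sub continuousOn_id)) hwc hwm hwp hwl
      (fun x hx => mul_nonpos_of_nonneg_of_nonpos (hF0 x ⟨hac.le.trans hx.1, hx.2⟩)
        (by linarith [hx.1])) (mul_neg_of_pos_of_neg hFb (by linarith))
    filter_upwards [this, hpos, hwc] with t h1 h2 h3
    rw [hI t h3] at h1
    rw [lt_div_iff₀ h2]
    nlinarith
  · filter_upwards [hpos, hwc, hwp] with t h2 h3 h4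
    have : 0 ≤ ∫ x in a..b, F x * (b - x) * w t x := by
      apply intervalIntegral.integral_nonneg hab.le
      intro x hx
      exact mul_nonneg (mul_nonneg (hF0 x hx) (by linarith [hx.2])) (h4 x hx).le
    rw [hI t h3] at this
    rw [div_lt_iff₀ h2]
    nlinarith

/-- For `0 < α < β < ∞` and `F : [α,β] → [0,∞)` continuous with `F(α) > 0` and
`F(β) > 0`, the ratio `ψ(ρ) = F̂(ρ+1)/F̂(ρ)` of Mellin transforms
`F̂(ρ) = ∫_α^β F(x) x^{ρ-1} dx` satisfies `lim_{ρ→+∞} ψ(ρ) = β` and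
`lim_{ρ→-∞} ψ(ρ) = α`. -/
theorem stmt_7 (α β : ℝ) (hα : 0 < α) (hαβ : α < β) (F : ℝ → ℝ)
    (hF : ContinuousOn F (Icc α β)) (hF0 : ∀ x ∈ Icc α β, 0 ≤ F x)
    (hFα : 0 < F α) (hFβ : 0 < F β)
    (Fhat : ℝ → ℝ) (hFhat : ∀ ρ : ℝ, Fhat ρ = ∫ x in α..β, F x * x ^ (ρ - 1))
    (ψ : ℝ → ℝ) (hψ : ∀ ρ : ℝ, ψ ρ = Fhat (ρ + 1) / Fhat ρ) :
    Tendsto ψ atTop (nhds β) ∧ Tendsto ψ atBot (nhds α) := by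
  have hcont : ∀ s : ℝ, ContinuousOn (fun x : ℝ => x ^ s) (Icc α β) := fun s x hx =>
    (Real.continuousAt_rpow_const x s (Or.inl (by linarith [hx.1]))).continuousWithinAt
  have hsucc : ∀ ρ, Fhat (ρ + 1) = ∫ x in α..β, F x * x * x ^ (ρ - 1) := by
    intro ρ
    rw [hFhat]
    apply intervalIntegral.integral_congr
    intro x hx
    rw [uIcc_of_le hαβ.le] at hx
    have hx0 : 0 < x := by linarith [hx.1]
    have : x ^ (ρ + 1 - 1) = x * x ^ (ρ - 1) := by
      rw [show ρ + 1 - 1 = 1 + (ρ - 1) by ring, Real.rpow_add hx0, Real.rpow_one]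
    simp only [this]
    ring
  constructor
  · have := (aux_lim_s7 atTop α β hαβ F (fun ρ x => x ^ (ρ - 1)) hF hF0 hFβ
      (Eventually.of_forall fun ρ => hcont _)
      (by
        filter_upwards [eventually_ge_atTop 1] with ρ hρ x hx y hy hxy
        exact Real.rpow_le_rpow (by linarith [hx.1]) hxy (by linarith))
      (Eventually.of_forall fun ρ x hx => Real.rpow_pos_of_pos (by linarith [hx.1]) _)
      (by
        intro c d hc hcd hd
        have h := (tendsto_rpow_atTop_of_base_lt_one (c / d)
          (by linarith [div_pos (hα.trans hc) (by linarith : 0 < d)])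
          ((div_lt_one (by linarith)).2 hcd)).comp (tendsto_atTop_add_const_right atTop (-1) tendsto_id)
        refine h.congr fun ρ => ?_
        simp only [Function.comp, id, ← sub_eq_add_neg]
        rw [Real.div_rpow (by linarith) (by linarith)])).2
    refine this.congr fun ρ => ?_
    rw [hψ, hsucc, hFhat]
  · have hmap : MapsTo (fun y => α + β - y) (Icc α β) (Icc α β) := fun y hy =>
      ⟨by linarith [hy.2], by linarith [hy.1]⟩
    have hmc : ContinuousOn (fun y => α + β - y) (Icc α β) := by fun_prop
    have hwc : ∀ ρ : ℝ, ContinuousOn (fun y : ℝ => (α + β - y) ^ (ρ - 1)) (Icc α β) :=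
      fun ρ => (hcont _).comp hmc hmap
    have hFc : ContinuousOn (fun y => F (α + β - y)) (Icc α β) := hF.comp hmc hmap
    obtain ⟨hp, hl⟩ := aux_lim_s7 atBot α β hαβ (fun y => F (α + β - y))
      (fun ρ y => (α + β - y) ^ (ρ - 1)) hFc
      (fun x hx => hF0 _ (hmap hx)) (by simpa using hFα)
      (Eventually.of_forall hwc)
      (by
        filter_upwards [eventually_le_atBot 1] with ρ hρ x hx y hy hxy
        exact Real.rpow_le_rpow_of_nonpos (by linarith [hy.2]) (by linarith) (by linarith))
      (Eventually.of_forall fun ρ x hx => Real.rpow_pos_of_pos (by linarith [hx.2]) _)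
      (by
        intro c d hc hcd hd
        have h := (tendsto_rpow_atBot_of_base_gt_one ((α + β - c) / (α + β - d))
          ((one_lt_div (by linarith)).2 (by linarith))).comp
            (tendsto_atBot_add_const_right atBot (-1) tendsto_id)
        refine h.congr fun ρ => ?_
        simp only [Function.comp, id, ← sub_eq_add_neg]
        rw [Real.div_rpow (by linarith) (by linarith)])
    have h := hl.const_sub (α + β)
    rw [show α + β - β = α by ring] at h
    refine h.congr' ?_
    filter_upwards [hp] with ρ hρ
    have e0 : ∫ y in α..β, F (α + β - y) * (α + β - y) ^ (ρ - 1) = Fhat ρ := by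
      rw [hFhat, intervalIntegral.integral_comp_sub_left (fun x => F x * x ^ (ρ - 1))]
      simp
    have e1 : ∫ y in α..β, F (α + β - y) * (α + β - y) * (α + β - y) ^ (ρ - 1)
        = Fhat (ρ + 1) := by
      rw [hsucc, intervalIntegral.integral_comp_sub_left (fun x => F x * x * x ^ (ρ - 1))]
      simp
    have e2 : (α + β) * (∫ y in α..β, F (α + β - y) * (α + β - y) ^ (ρ - 1))
        - ∫ y in α..β, F (α + β - y) * y * (α + β - y) ^ (ρ - 1) = Fhat (ρ + 1) := by
      rw [← e1, ← intervalIntegral.integral_const_mul, ← intervalIntegral.integral_sub]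
      · congr 1; ext x; ring
      · apply ContinuousOn.intervalIntegrable
        rw [uIcc_of_le hαβ.le]
        exact continuousOn_const.mul (hFc.mul (hwc ρ))
      · apply ContinuousOn.intervalIntegrable
        rw [uIcc_of_le hαβ.le]
        exact (hFc.mul continuousOn_id).mul (hwc ρ)
    rw [hψ, ← e2, ← e0, sub_div, mul_div_assoc, div_self hρ.ne', mul_one]
end

section
/- Let σ > 0 be real and n ≥ 1 an integer, and define G(ρ) = ∫_{-∞}^{+∞} exp(-σ t^{2n} + ρ t) dt for ρ ∈ ℝ. Then the ratio G(ρ+1)/G(ρ) tends to +∞ as ρ → +∞ and tends to 0 as ρ → -∞. -/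
open MeasureTheory Filter

lemma aux_integrable (σ : ℝ) (hσ : 0 < σ) (n : ℕ) (hn : 1 ≤ n) (ρ : ℝ) :
    Integrable (fun t : ℝ => Real.exp (-σ * t ^ (2 * n) + ρ * t)) := by
  have h := (integrable_exp_neg_mul_sq (half_pos hσ)).const_mul (Real.exp (σ + ρ ^ 2 / (2 * σ)))
  refine h.mono' (by fun_prop) (Eventually.of_forall fun t => ?_)
  rw [Real.norm_eq_abs, abs_of_pos (Real.exp_pos _), ← Real.exp_add, Real.exp_le_exp]
  have h1 : t ^ 2 - 1 ≤ t ^ (2 * n) := by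
    rw [pow_mul]
    rcases le_total 1 (t ^ 2) with h | h
    · have := le_self_pow₀ h (show n ≠ 0 by omega)
      linarith
    · have : 0 ≤ (t ^ 2) ^ n := by positivity
      linarith
  have h2 : ρ * t ≤ σ / 2 * t ^ 2 + ρ ^ 2 / (2 * σ) := by
    have : σ / 2 * t ^ 2 + ρ ^ 2 / (2 * σ) - ρ * t = (σ * t - ρ) ^ 2 / (2 * σ) := by
      field_simp
      ring
    have h3 : 0 ≤ (σ * t - ρ) ^ 2 / (2 * σ) := by positivity
    linarith
  nlinarith [mul_le_mul_of_nonneg_left h1 hσ.le]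

/-- For `σ > 0`, an integer `n ≥ 1`, and
`G(ρ) = ∫_{-∞}^{∞} exp(-σ t^{2n} + ρ t) dt`, the ratio `G(ρ+1)/G(ρ)` tends to
`+∞` as `ρ → +∞` and tends to `0` as `ρ → -∞`. -/
theorem stmt_11 (σ : ℝ) (hσ : 0 < σ) (n : ℕ) (hn : 1 ≤ n) (G : ℝ → ℝ)
    (hG : ∀ ρ : ℝ, G ρ = ∫ t : ℝ, Real.exp (-σ * t ^ (2 * n) + ρ * t)) :
    Tendsto (fun ρ : ℝ => G (ρ + 1) / G ρ) atTop atTop ∧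
      Tendsto (fun ρ : ℝ => G (ρ + 1) / G ρ) atBot (nhds 0) := by
  have hI := aux_integrable σ hσ n hn
  have hpos : ∀ ρ, 0 < G ρ := fun ρ => by
    rw [hG]
    exact integral_exp_pos (hI ρ)
  have hsymm : ∀ ρ, G (-ρ) = G ρ := fun ρ => by
    rw [hG, hG, ← integral_neg_eq_self]
    congr 1
    ext t
    rw [(even_two_mul n).neg_pow]
    ring_nf
  have key : ∀ M ρ : ℝ, 0 ≤ ρ →
      Real.exp M * (G ρ - Real.exp (ρ * M) * G 0) ≤ G (ρ + 1) := by
    intro M ρ hρ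
    rw [hG, hG, hG, ← integral_const_mul, ← integral_sub (hI ρ) ((hI 0).const_mul _),
      ← integral_const_mul]
    refine integral_mono (((hI ρ).sub ((hI 0).const_mul _)).const_mul _) (hI _) fun t => ?_
    have e1 : Real.exp (-σ * t ^ (2 * n) + ρ * t)
        = Real.exp (-σ * t ^ (2 * n)) * Real.exp (ρ * t) := Real.exp_add _ _
    have e2 : Real.exp (-σ * t ^ (2 * n) + (ρ + 1) * t)
        = Real.exp (-σ * t ^ (2 * n)) * Real.exp (ρ * t) * Real.exp t := by
      rw [← Real.exp_add, ← Real.exp_add]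
      ring_nf
    simp only [e1, e2, zero_mul, add_zero]
    have hw := Real.exp_pos (-σ * t ^ (2 * n))
    have hr := Real.exp_pos (ρ * t)
    have hM := Real.exp_pos M
    have hrM := Real.exp_pos (ρ * M)
    have ht := Real.exp_pos t
    rcases le_total M t with h | h
    · have h1 := mul_le_mul_of_nonneg_left (Real.exp_le_exp.2 h) (mul_pos hw hr).le
      have h2 := mul_pos hM (mul_pos hrM hw)
      linarith
    · have h1 : Real.exp (ρ * t) ≤ Real.exp (ρ * M) :=
        Real.exp_le_exp.2 (mul_le_mul_of_nonneg_left h hρ)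
      have h2 := mul_le_mul_of_nonneg_left h1 (mul_pos hM hw).le
      have h3 := mul_pos (mul_pos hw hr) ht
      linarith
  have low : ∀ M : ℝ, ∃ c : ℝ, 0 < c ∧ ∀ ρ : ℝ, 0 ≤ ρ →
      Real.exp (ρ * (M + 1)) * c ≤ G ρ := by
    intro M
    have hne : NeZero ((volume : Measure ℝ).restrict (Set.Ioi (M + 1))) :=
      ⟨by simp [Measure.restrict_eq_zero]⟩
    refine ⟨∫ t in Set.Ioi (M + 1), Real.exp (-σ * t ^ (2 * n) + 0 * t),
      integral_exp_pos (hI 0).integrableOn, fun ρ hρ => ?_⟩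
    rw [hG, ← integral_const_mul]
    refine le_trans ?_ (setIntegral_le_integral (s := Set.Ioi (M + 1)) (hI ρ)
      (Eventually.of_forall fun t => (Real.exp_pos _).le))
    refine setIntegral_mono_on ((hI 0).const_mul _).integrableOn (hI ρ).integrableOn
      measurableSet_Ioi fun t ht => ?_
    rw [← Real.exp_add, Real.exp_le_exp]
    have := mul_le_mul_of_nonneg_left (le_of_lt (Set.mem_Ioi.1 ht)) hρ
    linarith
  have first : Tendsto (fun ρ : ℝ => G (ρ + 1) / G ρ) atTop atTop := by
    have main : ∀ M : ℝ, ∀ᶠ ρ in atTop, Real.exp M / 2 ≤ G (ρ + 1) / G ρ := by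
      intro M
      obtain ⟨c, hc, hlow⟩ := low M
      filter_upwards [eventually_ge_atTop 0,
        Real.tendsto_exp_atTop.eventually_ge_atTop (2 * G 0 / c)] with ρ hρ h
      rw [le_div_iff₀ (hpos ρ)]
      rw [div_le_iff₀ hc] at h
      have h1 := hlow ρ hρ
      rw [mul_add, Real.exp_add, mul_one, mul_assoc] at h1
      have h2 := mul_le_mul_of_nonneg_left h (Real.exp_pos (ρ * M)).le
      have h3 : Real.exp (ρ * M) * G 0 ≤ G ρ / 2 := by linarith
      have h4 := key M ρ hρ
      have h5 := mul_le_mul_of_nonneg_left h3 (Real.exp_pos M).le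
      linarith
    rw [tendsto_atTop]
    intro b
    filter_upwards [main (2 * b)] with ρ h
    have := Real.add_one_le_exp (2 * b)
    have h6 : b ≤ Real.exp (2 * b) / 2 := by linarith
    exact h6.trans h
  refine ⟨first, ?_⟩
  have h7 : Tendsto (fun ρ : ℝ => -ρ + (-1)) atBot atTop :=
    tendsto_atTop_add_const_right _ _ tendsto_neg_atBot_atTop
  refine (first.comp h7).inv_tendsto_atTop.congr fun ρ => ?_
  simp only [Pi.inv_apply, Function.comp]
  rw [inv_div, ← hsymm (ρ + 1), ← hsymm ρ]
  ring_nf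
end

section
/- Let β > 0 and ρ > 0 be real, and set F̂(ρ) = ∫_0^β exp(1/(x-β)) x^{ρ-1} dx. Then ρ · F̂(ρ) = Σ_{n=0}^{∞} (n+1) β^{-(n+2)} F̂(ρ+n+1). -/
open MeasureTheory Real

lemma aux_bound_s17 (u : ℝ) (hu : 0 ≤ u) : Real.exp (-u) * u ^ 2 ≤ 2 := by
  have h := Real.quadratic_le_exp_of_nonneg hu
  have hp := Real.exp_pos (-u)
  have h1 : Real.exp (-u) * Real.exp u = 1 := by rw [← Real.exp_add]; simp
  nlinarith [mul_le_mul_of_nonneg_left h hp.le]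

lemma aux_E_tendsto (β : ℝ) :
    Filter.Tendsto (fun x : ℝ => Real.exp (1 / (x - β))) (nhdsWithin β (Set.Iio β)) (nhds 0) := by
  apply Real.tendsto_exp_atBot.comp
  simp only [one_div]
  apply Filter.Tendsto.comp tendsto_inv_nhdsLT_zero
  rw [tendsto_nhdsWithin_iff]
  constructor
  · have : Filter.Tendsto (fun x : ℝ => x - β) (nhds β) (nhds (β - β)) :=
      (continuous_id.sub continuous_const).tendsto β
    rw [sub_self] at this
    exact this.mono_left nhdsWithin_le_nhds
  · filter_upwards [self_mem_nhdsWithin] with x hx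
    simpa using hx

lemma aux_int1 (β : ℝ) (hβ : 0 < β) (s : ℝ) (hs : -1 < s) :
    IntegrableOn (fun x : ℝ => Real.exp (1 / (x - β)) * x ^ s) (Set.Ioo 0 β) := by
  have h0 : IntegrableOn (fun x : ℝ => x ^ s) (Set.Ioo 0 β) := by
    have := (intervalIntegral.intervalIntegrable_rpow' (a := 0) (b := β) hs)
    rw [intervalIntegrable_iff_integrableOn_Ioo_of_le hβ.le] at this
    exact this
  refine Integrable.mono' h0 (by fun_prop) ?_
  filter_upwards [ae_restrict_mem measurableSet_Ioo] with x hx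
  have h1 : Real.exp (1 / (x - β)) ≤ 1 := by
    apply Real.exp_le_one_iff.2
    exact div_nonpos_of_nonneg_of_nonpos zero_le_one (by linarith [hx.2])
  have h2 : 0 ≤ x ^ s := Real.rpow_nonneg hx.1.le s
  rw [Real.norm_of_nonneg (by positivity)]
  nlinarith

lemma aux_int2 (β : ℝ) (hβ : 0 < β) (s : ℝ) (hs : -1 < s) :
    IntegrableOn (fun x : ℝ => Real.exp (1 / (x - β)) * (1 / (β - x) ^ 2) * x ^ s)
      (Set.Ioo 0 β) := by
  have h0 : IntegrableOn (fun x : ℝ => x ^ s) (Set.Ioo 0 β) := by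
    have := (intervalIntegral.intervalIntegrable_rpow' (a := 0) (b := β) hs)
    rw [intervalIntegrable_iff_integrableOn_Ioo_of_le hβ.le] at this
    exact this
  refine Integrable.mono' (h0.const_mul 2)
    (by apply Measurable.aestronglyMeasurable; fun_prop) ?_
  filter_upwards [ae_restrict_mem measurableSet_Ioo] with x hx
  have h1 : Real.exp (1 / (x - β)) * (1 / (β - x) ^ 2) ≤ 2 := by
    have hp : 0 < β - x := by linarith [hx.2]
    have := aux_bound_s17 (1 / (β - x)) (by positivity)
    have e : 1 / (x - β) = -(1 / (β - x)) := by
      rw [← neg_sub β x, one_div_neg_eq_neg_one_div]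
    rw [e]
    simpa using this
  have h2 : 0 ≤ x ^ s := Real.rpow_nonneg hx.1.le s
  rw [Real.norm_of_nonneg (by positivity)]
  exact mul_le_mul_of_nonneg_right h1 h2

lemma aux_parts_s17 (β : ℝ) (hβ : 0 < β) (ρ : ℝ) (hρ : 0 < ρ) :
    ρ * ∫ x in Set.Ioo 0 β, Real.exp (1 / (x - β)) * x ^ (ρ - 1) =
      ∫ x in Set.Ioo 0 β, Real.exp (1 / (x - β)) * (1 / (β - x) ^ 2) * x ^ ρ := by
  have i1 := (aux_int1 β hβ (ρ - 1) (by linarith)).const_mul ρ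
  have i2 := aux_int2 β hβ ρ (by linarith)
  have key := intervalIntegral.integral_eq_sub_of_hasDerivAt_of_tendsto
    (f := fun x : ℝ => Real.exp (1 / (x - β)) * x ^ ρ)
    (f' := fun x : ℝ => ρ * (Real.exp (1 / (x - β)) * x ^ (ρ - 1)) -
      Real.exp (1 / (x - β)) * (1 / (β - x) ^ 2) * x ^ ρ) (fa := 0) (fb := 0) hβ
    (by
      intro x hx
      have hne : x - β ≠ 0 := by linarith [hx.2]
      have hne' : β - x ≠ 0 := by linarith [hx.2]
      have d1 : HasDerivAt (fun x : ℝ => 1 / (x - β)) (-1 / (x - β) ^ 2) x := by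
        have d0 := ((hasDerivAt_id x).sub_const β).inv hne
        simp only [one_div]
        exact d0
      refine (d1.exp.mul (Real.hasDerivAt_rpow_const (p := ρ) (Or.inl hx.1.ne'))).congr_deriv ?_
      have : (β - x) ^ 2 = (x - β) ^ 2 := by ring
      rw [this]
      ring)
    (by
      rw [intervalIntegrable_iff_integrableOn_Ioo_of_le hβ.le]
      exact i1.sub i2)
    (by
      have c : ContinuousAt (fun x : ℝ => Real.exp (1 / (x - β)) * x ^ ρ) 0 := by
        apply ContinuousAt.mul
        · apply ContinuousAt.rexp
          apply ContinuousAt.div continuousAt_const (by fun_prop)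
          simpa using hβ.ne'
        · exact Real.continuousAt_rpow_const _ _ (Or.inr hρ.le)
      have := c.tendsto
      simp only [Real.zero_rpow hρ.ne', mul_zero] at this
      exact this.mono_left nhdsWithin_le_nhds)
    (by
      have c := (Real.continuousAt_rpow_const β ρ (Or.inr hρ.le)).tendsto
      have := (aux_E_tendsto β).mul (c.mono_left (nhdsWithin_le_nhds (s := Set.Iio β)))
      simpa using this)
  rw [intervalIntegral.integral_of_le hβ.le, integral_Ioc_eq_integral_Ioo,
    integral_sub i1 i2, integral_const_mul] at key
  linarith

/-- For `β > 0` and `ρ > 0`, with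
`F̂(ρ) = ∫_0^β exp(1/(x-β)) x^{ρ-1} dx`:
`ρ F̂(ρ) = Σ_{n=0}^{∞} (n+1) β^{-(n+2)} F̂(ρ+n+1)`. -/
theorem stmt_17 (β : ℝ) (hβ : 0 < β) (Fhat : ℝ → ℝ)
    (hFhat : ∀ ρ : ℝ, Fhat ρ = ∫ x in (0 : ℝ)..β, Real.exp (1 / (x - β)) * x ^ (ρ - 1)) :
    ∀ ρ : ℝ, 0 < ρ →
      ρ * Fhat ρ =
        ∑' n : ℕ, ((n : ℝ) + 1) * β ^ (-((n : ℤ) + 2)) * Fhat (ρ + n + 1) := by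
  intro ρ hρ
  have hF : ∀ s, Fhat s = ∫ x in Set.Ioo 0 β, Real.exp (1 / (x - β)) * x ^ (s - 1) := by
    intro s
    rw [hFhat, intervalIntegral.integral_of_le hβ.le, integral_Ioc_eq_integral_Ioo]
  rw [hF ρ, aux_parts_s17 β hβ ρ hρ]
  set f : ℕ → ℝ → ℝ := fun n x => ((n : ℝ) + 1) * β ^ (-((n : ℤ) + 2)) *
    (Real.exp (1 / (x - β)) * x ^ (ρ + n + 1 - 1)) with hf
  have hs : ∀ x ∈ Set.Ioo 0 β, HasSum (fun n => f n x)
      (Real.exp (1 / (x - β)) * (1 / (β - x) ^ 2) * x ^ ρ) := by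
    intro x hx
    have hr : ‖x / β‖ < 1 := by
      rw [Real.norm_of_nonneg (div_nonneg hx.1.le hβ.le), div_lt_one hβ]
      exact hx.2
    have h := (hasSum_choose_mul_geometric_of_norm_lt_one 1 hr).mul_left
      (Real.exp (1 / (x - β)) * x ^ ρ / β ^ 2)
    have hne : β - x ≠ 0 := by linarith [hx.2]
    have hb := hβ.ne'
    convert! h using 1
    · ext n
      have e1 : x ^ (ρ + n + 1 - 1) = x ^ ρ * x ^ n := by
        rw [add_sub_cancel_right, Real.rpow_add hx.1, Real.rpow_natCast]
      have e2 : β ^ (-((n : ℤ) + 2)) = (β ^ n * β ^ 2)⁻¹ := by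
        rw [zpow_neg, ← pow_add]
        norm_cast
      simp only [hf, e1, e2, Nat.choose_one_right, div_pow]
      push_cast
      field_simp
    · have : 1 - x / β = (β - x) / β := by field_simp
      rw [this, one_add_one_eq_two, div_pow]
      field_simp
  have H := hasSum_integral_of_dominated_convergence
    (μ := volume.restrict (Set.Ioo 0 β)) (F := f)
    (f := fun x => Real.exp (1 / (x - β)) * (1 / (β - x) ^ 2) * x ^ ρ) f
    (by
      intro n
      apply Measurable.aestronglyMeasurable
      simp only [hf]
      fun_prop)
    (by
      intro n
      filter_upwards [ae_restrict_mem measurableSet_Ioo] with x hx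
      have h2 : 0 ≤ x ^ (ρ + n + 1 - 1) := Real.rpow_nonneg hx.1.le _
      rw [Real.norm_of_nonneg]
      simp only [hf]
      positivity)
    (by
      filter_upwards [ae_restrict_mem measurableSet_Ioo] with x hx
      exact (hs x hx).summable)
    (by
      refine (aux_int2 β hβ ρ (by linarith)).congr ?_
      filter_upwards [ae_restrict_mem measurableSet_Ioo] with x hx
      exact (hs x hx).tsum_eq.symm)
    (by
      filter_upwards [ae_restrict_mem measurableSet_Ioo] with x hx
      exact hs x hx)
  rw [← H.tsum_eq]
  congr 1
  ext n
  rw [hF, ← integral_const_mul]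
end

section
/- Let β > 0 and set F̂(ρ) = ∫_0^β exp(1/(x-β)) x^{ρ-1} dx for ρ > 0. Then lim_{ρ → +∞} F̂(ρ+1)/F̂(ρ) = β. -/
open MeasureTheory Filter Real

/-- For `β > 0`, with `F̂(ρ) = ∫_0^β exp(1/(x-β)) x^{ρ-1} dx` (finite for
`ρ > 0`): `lim_{ρ → +∞} F̂(ρ+1)/F̂(ρ) = β`. -/
theorem stmt_18 (β : ℝ) (hβ : 0 < β) (Fhat : ℝ → ℝ)
    (hFhat : ∀ ρ : ℝ, Fhat ρ = ∫ x in (0 : ℝ)..β, Real.exp (1 / (x - β)) * x ^ (ρ - 1)) :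
    Tendsto (fun ρ : ℝ => Fhat (ρ + 1) / Fhat ρ) atTop (nhds β) := by
  have hw : IntervalIntegrable (fun x : ℝ => Real.exp (1 / (x - β))) volume 0 β := by
    rw [intervalIntegrable_iff_integrableOn_Ioc_of_le hβ.le]
    refine Measure.integrableOn_of_bounded (M := 1) (by simp) ?_ ?_
    · exact Measurable.aestronglyMeasurable (by fun_prop)
    · refine (ae_restrict_iff' measurableSet_Ioc).2 (Eventually.of_forall fun x hx => ?_)
      rw [Real.norm_eq_abs, abs_of_pos (Real.exp_pos _), Real.exp_le_one_iff]
      exact div_nonpos_of_nonneg_of_nonpos zero_le_one (by linarith [hx.2])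
  have hI : ∀ ρ : ℝ, 1 ≤ ρ → IntervalIntegrable
      (fun x : ℝ => Real.exp (1 / (x - β)) * x ^ (ρ - 1)) volume 0 β := by
    intro ρ hρ
    refine hw.mul_continuousOn (Continuous.continuousOn ?_)
    exact Real.continuous_rpow_const (by linarith)
  have hstep : ∀ ρ : ℝ, 1 < ρ → ∀ x : ℝ, 0 ≤ x → x ^ (ρ + 1 - 1) = x * x ^ (ρ - 1) := by
    intro ρ hρ x hx
    rw [show ρ + 1 - 1 = 1 + (ρ - 1) by ring,
      Real.rpow_add_of_nonneg hx zero_le_one (by linarith), Real.rpow_one]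
  -- lower bound for Fhat
  have hlow : ∀ b : ℝ, 0 < b → b < β → ∀ ρ : ℝ, 1 < ρ →
      (∫ x in b..β, Real.exp (1 / (x - β))) * b ^ (ρ - 1) ≤ Fhat ρ := by
    intro b hb hbβ ρ hρ
    have hsub : Set.uIcc b β ⊆ Set.uIcc 0 β := by
      rw [Set.uIcc_of_le hbβ.le, Set.uIcc_of_le hβ.le]
      exact Set.Icc_subset_Icc_left hb.le
    have hsub' : Set.uIcc 0 b ⊆ Set.uIcc 0 β := by
      rw [Set.uIcc_of_le hb.le, Set.uIcc_of_le hβ.le]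
      exact Set.Icc_subset_Icc_right hbβ.le
    rw [hFhat, ← intervalIntegral.integral_add_adjacent_intervals
      ((hI ρ hρ.le).mono_set hsub') ((hI ρ hρ.le).mono_set hsub),
      ← intervalIntegral.integral_mul_const]
    have h1 : 0 ≤ ∫ x in (0:ℝ)..b, Real.exp (1 / (x - β)) * x ^ (ρ - 1) := by
      refine intervalIntegral.integral_nonneg hb.le fun x hx => ?_
      exact mul_nonneg (Real.exp_pos _).le (Real.rpow_nonneg hx.1 _)
    have h2 : ∫ x in b..β, Real.exp (1 / (x - β)) * b ^ (ρ - 1) ≤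
        ∫ x in b..β, Real.exp (1 / (x - β)) * x ^ (ρ - 1) := by
      refine intervalIntegral.integral_mono_on hbβ.le ((hw.mono_set hsub).mul_const _)
        ((hI ρ hρ.le).mono_set hsub) fun x hx => ?_
      exact mul_le_mul_of_nonneg_left
        (Real.rpow_le_rpow hb.le hx.1 (by linarith)) (Real.exp_pos _).le
    linarith
  have hC : ∀ b : ℝ, 0 < b → b < β → 0 < ∫ x in b..β, Real.exp (1 / (x - β)) := by
    intro b hb hbβ
    refine intervalIntegral.intervalIntegral_pos_of_pos (hw.mono_set ?_)
      (fun x => Real.exp_pos _) hbβ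
    rw [Set.uIcc_of_le hbβ.le, Set.uIcc_of_le hβ.le]
    exact Set.Icc_subset_Icc_left hb.le
  have hpos : ∀ ρ : ℝ, 1 < ρ → 0 < Fhat ρ := by
    intro ρ hρ
    have hb : 0 < β / 2 := by linarith
    have hb' : β / 2 < β := by linarith
    exact lt_of_lt_of_le (mul_pos (hC _ hb hb') (Real.rpow_pos_of_pos hb _)) (hlow _ hb hb' ρ hρ)
  have hup : ∀ ρ : ℝ, 1 < ρ → Fhat (ρ + 1) ≤ β * Fhat ρ := by
    intro ρ hρ
    rw [hFhat, hFhat, ← intervalIntegral.integral_const_mul]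
    refine intervalIntegral.integral_mono_on hβ.le (hI _ (by linarith))
      ((hI ρ hρ.le).const_mul _) fun x hx => ?_
    rw [hstep ρ hρ x hx.1]
    have h := mul_nonneg (Real.exp_pos (1 / (x - β))).le (Real.rpow_nonneg hx.1 (ρ - 1))
    nlinarith [mul_le_mul_of_nonneg_right hx.2 h]
  have hkey : ∀ a : ℝ, 0 < a → ∀ ρ : ℝ, 1 < ρ →
      a * Fhat ρ - (∫ x in (0:ℝ)..β, Real.exp (1 / (x - β))) * (a * a ^ (ρ - 1))
        ≤ Fhat (ρ + 1) := by
    intro a ha ρ hρ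
    rw [hFhat, hFhat, ← intervalIntegral.integral_const_mul,
      ← intervalIntegral.integral_mul_const, ← intervalIntegral.integral_sub
        ((hI ρ hρ.le).const_mul _) (hw.mul_const _)]
    refine intervalIntegral.integral_mono_on hβ.le
      (((hI ρ hρ.le).const_mul _).sub (hw.mul_const _)) (hI _ (by linarith)) fun x hx => ?_
    rw [hstep ρ hρ x hx.1]
    have hx0 := Real.rpow_nonneg hx.1 (ρ - 1)
    have ha0 := Real.rpow_nonneg ha.le (ρ - 1)
    have h : a * x ^ (ρ - 1) - a * a ^ (ρ - 1) ≤ x * x ^ (ρ - 1) := by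
      rcases le_total a x with h | h
      · nlinarith [mul_le_mul_of_nonneg_right h hx0, mul_nonneg ha.le ha0]
      · have := Real.rpow_le_rpow hx.1 h (by linarith : 0 ≤ ρ - 1)
        nlinarith [mul_le_mul_of_nonneg_left this ha.le, mul_nonneg hx.1 hx0]
    have := mul_le_mul_of_nonneg_left h (Real.exp_pos (1 / (x - β))).le
    linarith
  rw [tendsto_order]
  constructor
  · intro l hl
    obtain ⟨a, hla, haβ⟩ := exists_between (max_lt hl hβ)
    obtain ⟨b, hab, hbβ⟩ := exists_between haβ
    have hl' : l < a := lt_of_le_of_lt (le_max_left _ _) hla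
    have ha : 0 < a := lt_of_le_of_lt (le_max_right _ _) hla
    have hb : 0 < b := ha.trans hab
    set W := ∫ x in (0:ℝ)..β, Real.exp (1 / (x - β)) with hW
    set C := ∫ x in b..β, Real.exp (1 / (x - β)) with hCdef
    have hCp : 0 < C := hC b hb hbβ
    have hW0 : 0 ≤ W := intervalIntegral.integral_nonneg hβ.le fun x _ => (Real.exp_pos _).le
    have hlim : Tendsto (fun ρ : ℝ => a - W * a / C * (a / b) ^ (ρ - 1)) atTop (nhds a) := by
      have h1 : Tendsto (fun ρ : ℝ => (a / b) ^ (ρ - 1)) atTop (nhds 0) :=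
        (tendsto_rpow_atTop_of_base_lt_one (a / b) (by have := div_pos ha hb; linarith)
          ((div_lt_one hb).2 hab)).comp (tendsto_atTop_add_const_right _ (-1) tendsto_id)
      simpa using (h1.const_mul (W * a / C)).const_sub a
    filter_upwards [hlim.eventually (lt_mem_nhds hl'), eventually_gt_atTop 1] with ρ h1 hρ
    refine lt_of_lt_of_le h1 ?_
    rw [le_div_iff₀ (hpos ρ hρ)]
    refine le_trans ?_ (hkey a ha ρ hρ)
    have h2 := hlow b hb hbβ ρ hρ
    have hbp := Real.rpow_pos_of_pos hb (ρ - 1)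
    have hap := Real.rpow_pos_of_pos ha (ρ - 1)
    rw [Real.div_rpow ha.le hb.le]
    have h3 : W * (a * a ^ (ρ - 1)) =
        W * a / C * (a ^ (ρ - 1) / b ^ (ρ - 1)) * (C * b ^ (ρ - 1)) := by
      field_simp
    have h4 := mul_le_mul_of_nonneg_left h2
      (by positivity : 0 ≤ W * a / C * (a ^ (ρ - 1) / b ^ (ρ - 1)))
    rw [h3]
    linarith
  · intro u hu
    filter_upwards [eventually_gt_atTop 1] with ρ hρ
    refine lt_of_le_of_lt ?_ hu
    rw [div_le_iff₀ (hpos ρ hρ)]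
    exact hup ρ hρ
end
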